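/- arXiv:1706.00204 — 6 statements merged into one kernel-verified Lean document; each statement's English description precedes it below -/
import Mathlib

section
/- Let a > 0 and b ≥ 1, let P be an (a,b)-standard probability measure on ℝ^D with compact support 𝒳, and let X_1, …, X_n be independent random points drawn from P. Then for every u > 0, P(d_H(𝒳, {X_1, …, X_n}) ≥ u) ≤ min{1, (4^b / (a u^b)) · exp(−a (u/2)^b n)}. -/
open MeasureTheory Metric

/-- All sample points lie in the support, almost surely. -/
lemma aux_ae_mem {E : Type*} [MeasurableSpace E] (P : Measure E) [IsProbabilityMeasure P]
    (K : Set E) (hK : MeasurableSet K) (h1 : P K = 1) (n : ℕ) :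
    ∀ᵐ X ∂(Measure.pi fun _ : Fin n => P), ∀ j, X j ∈ K := by
  rw [ae_all_iff]
  intro j
  have h : ∀ᵐ x ∂P, x ∈ K := by
    rw [← prob_compl_eq_zero_iff hK] at h1
    exact h1
  exact (Measure.quasiMeasurePreserving_eval (fun _ : Fin n => P) j).ae h

lemma aux_packing {E : Type*} [PseudoMetricSpace E] [MeasurableSpace E] [OpensMeasurableSpace E]
    (P : Measure E) [IsProbabilityMeasure P] (K : Set E) (r c : ℝ) (hc : 0 < c) (hr : 0 < r)
    (h : ∀ x ∈ K, ENNReal.ofReal c ≤ P (ball x r)) :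
    ∃ s : Finset E, (∀ x ∈ s, x ∈ K) ∧ (s.card : ℝ) ≤ 1 / c ∧
      ∀ x ∈ K, ∃ y ∈ s, dist x y < 2 * r := by
  classical
  let Q : Finset E → Prop := fun s => (∀ x ∈ s, x ∈ K) ∧
    ∀ x ∈ s, ∀ y ∈ s, x ≠ y → 2 * r ≤ dist x y
  have hQ : ∀ s, Q s → (s.card : ℝ) ≤ 1 / c := by
    intro s ⟨h1, h2⟩
    have hd : Set.PairwiseDisjoint (s : Set E) (fun x => ball x r) := by
      intro x hx y hy hxy
      apply ball_disjoint_ball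
      have := h2 x hx y hy hxy
      linarith
    have h3 : P (⋃ x ∈ s, ball x r) = ∑ x ∈ s, P (ball x r) :=
      measure_biUnion_finset hd (fun x _ => measurableSet_ball)
    have h4 : ∑ x ∈ s, ENNReal.ofReal c ≤ 1 := by
      calc _ ≤ ∑ x ∈ s, P (ball x r) := Finset.sum_le_sum fun x hx => h x (h1 x hx)
        _ ≤ 1 := by rw [← h3]; exact prob_le_one
    rw [Finset.sum_const, nsmul_eq_mul, ← ENNReal.ofReal_natCast,
      ← ENNReal.ofReal_mul (by positivity), ENNReal.ofReal_le_one] at h4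
    rw [le_div_iff₀ hc]
    exact h4
  let S : Set ℕ := {k | ∃ s, Q s ∧ s.card = k}
  have hS : S.Nonempty := ⟨0, ∅, ⟨by simp, by simp⟩, by simp⟩
  have hSb : BddAbove S := by
    refine ⟨⌊1 / c⌋₊, ?_⟩
    rintro k ⟨s, hs, rfl⟩
    exact Nat.le_floor (hQ s hs)
  obtain ⟨s, hs, hk⟩ := Nat.sSup_mem hS hSb
  refine ⟨s, hs.1, hQ s hs, ?_⟩
  intro x hx
  by_contra! hcon
  have hxs : x ∉ s := by
    intro hm
    have := hcon x hm
    rw [dist_self] at this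
    linarith
  have hQ' : Q (insert x s) := by
    refine ⟨?_, ?_⟩
    · intro y hy
      rcases Finset.mem_insert.1 hy with rfl | hy
      · exact hx
      · exact hs.1 y hy
    · intro y hy z hz hyz
      rcases Finset.mem_insert.1 hy with rfl | hy1 <;> rcases Finset.mem_insert.1 hz with rfl | hz1
      · exact absurd rfl hyz
      · exact hcon z hz1
      · rw [dist_comm]; exact hcon y hy1
      · exact hs.2 y hy1 z hz1 hyz
  have := le_csSup hSb (show (insert x s).card ∈ S from ⟨_, hQ', rfl⟩)
  rw [Finset.card_insert_of_notMem hxs, hk] at this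
  omega

lemma aux_hd {E : Type*} [PseudoMetricSpace E] (K : Set E) (hK : IsCompact K) (hne : K.Nonempty)
    {n : ℕ} (X : Fin n → E) (u : ℝ) (hX : ∀ j, X j ∈ K)
    (h : ∀ x ∈ K, ∃ j, dist x (X j) < u) : hausdorffDist K (Set.range X) < u := by
  obtain ⟨x0, hx0, hmax⟩ := hK.exists_isMaxOn hne
    (continuous_infDist_pt (Set.range X)).continuousOn
  have hlt : infDist x0 (Set.range X) < u := by
    obtain ⟨j, hj⟩ := h x0 hx0
    exact (infDist_le_dist_of_mem (Set.mem_range_self j)).trans_lt hj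
  refine lt_of_le_of_lt (hausdorffDist_le_of_infDist infDist_nonneg (fun x hx => hmax hx) ?_) hlt
  rintro _ ⟨j, rfl⟩
  rw [infDist_zero_of_mem (hX j)]
  exact infDist_nonneg

lemma aux_miss {E : Type*} [PseudoMetricSpace E] [MeasurableSpace E] [OpensMeasurableSpace E]
    (P : Measure E) [IsProbabilityMeasure P] (x : E) (r q : ℝ) (hq : 0 ≤ q)
    (h : ENNReal.ofReal (min 1 q) ≤ P (ball x r)) (n : ℕ) (hn : n ≠ 0) :
    (Measure.pi fun _ : Fin n => P) {X | ∀ j, X j ∉ ball x r} ≤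
      ENNReal.ofReal (Real.exp (-(q * n))) := by
  have h0 : {X : Fin n → E | ∀ j, X j ∉ ball x r} = Set.univ.pi fun _ => (ball x r)ᶜ := by
    ext X; simp
  rw [h0, Measure.pi_pi, Finset.prod_const, Finset.card_univ, Fintype.card_fin,
    prob_compl_eq_one_sub measurableSet_ball]
  have h1 : 1 - P (ball x r) ≤ ENNReal.ofReal (Real.exp (-q)) := by
    calc 1 - P (ball x r) ≤ 1 - ENNReal.ofReal (min 1 q) := tsub_le_tsub_left h 1
      _ = ENNReal.ofReal (1 - min 1 q) := by
        rw [ENNReal.ofReal_sub _ (le_min zero_le_one hq), ENNReal.ofReal_one]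
      _ ≤ _ := by
        apply ENNReal.ofReal_le_ofReal
        rcases le_total 1 q with h | h
        · rw [min_eq_left h]; simp [Real.exp_nonneg]
        · rw [min_eq_right h]; exact Real.one_sub_le_exp_neg q
  calc (1 - P (ball x r)) ^ n ≤ (ENNReal.ofReal (Real.exp (-q))) ^ n := by gcongr
    _ = _ := by
      rw [← ENNReal.ofReal_pow (Real.exp_nonneg _), ← Real.exp_nat_mul]
      congr 2; ring

/-- For an `(a,b)`-standard probability measure `P` on `ℝ^D` with compact
support `𝒳`, and `X_1, …, X_n` i.i.d. from `P`, for every `u > 0`,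
`P(d_H(𝒳, {X_1,…,X_n}) ≥ u) ≤ min {1, (4^b / (a u^b)) · exp(−a (u/2)^b n)}`. -/
theorem hausdorff_tail_bound {D : ℕ} (a b : ℝ) (ha : 0 < a) (hb : 1 ≤ b)
    (P : Measure (EuclideanSpace ℝ (Fin D))) [IsProbabilityMeasure P]
    (𝒳 : Set (EuclideanSpace ℝ (Fin D))) (h𝒳c : IsCompact 𝒳) (h𝒳ne : 𝒳.Nonempty)
    (hP𝒳 : P 𝒳 = 1)
    (hstd : ∀ x ∈ 𝒳, ∀ t : ℝ, 0 < t →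
      ENNReal.ofReal (min 1 (a * t ^ b)) ≤ P (ball x t))
    (n : ℕ) (u : ℝ) (hu : 0 < u) :
    (Measure.pi fun _ : Fin n => P) {X | u ≤ hausdorffDist 𝒳 (Set.range X)} ≤
      ENNReal.ofReal
        (min 1 (4 ^ b / (a * u ^ b) * Real.exp (-(a * (u / 2) ^ b * n)))) := by
  rcases Nat.eq_zero_or_pos n with rfl | hn
  · have : {X : Fin 0 → EuclideanSpace ℝ (Fin D) | u ≤ hausdorffDist 𝒳 (Set.range X)} = ∅ := by
      ext X
      simp [Set.range_eq_empty, hausdorffDist_empty, hu]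
    rw [this]; simp
  have hae := aux_ae_mem P 𝒳 h𝒳c.measurableSet hP𝒳 n
  rw [ENNReal.ofReal_min, ENNReal.ofReal_one]
  refine le_min prob_le_one ?_
  have hcpos : 0 < a * (u / 4) ^ b := by positivity
  have h4 : 1 / (a * (u / 4) ^ b) = 4 ^ b / (a * u ^ b) := by
    rw [Real.div_rpow hu.le (by norm_num)]
    have : (0 : ℝ) < 4 ^ b := by positivity
    have : (0 : ℝ) < u ^ b := by positivity
    field_simp
  rcases lt_or_ge 1 (a * (u / 4) ^ b) with hbig | hsmall
  · -- the support has diameter less than `u`, so the event is null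
    have hz : (Measure.pi fun _ : Fin n => P)
        {X | u ≤ hausdorffDist 𝒳 (Set.range X)} = 0 := by
      rw [measure_eq_zero_iff_ae_notMem]
      filter_upwards [hae] with X hX
      refine not_le.2 ?_
      refine aux_hd 𝒳 h𝒳c h𝒳ne X u hX ?_
      intro x hx
      refine ⟨⟨0, hn⟩, ?_⟩
      by_contra! hge
      have hd : Disjoint (ball x (u / 4)) (ball (X ⟨0, hn⟩) (u / 4)) :=
        ball_disjoint_ball (by linarith)
      have e1 := hstd x hx (u / 4) (by positivity)
      have e2 := hstd _ (hX ⟨0, hn⟩) (u / 4) (by positivity)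
      rw [min_eq_left hbig.le, ENNReal.ofReal_one] at e1 e2
      have e3 := measure_union (μ := P) hd measurableSet_ball
      have e4 : (1 : ENNReal) + 1 ≤ 1 := by
        calc (1 : ENNReal) + 1 ≤ _ := add_le_add e1 e2
          _ ≤ 1 := by rw [← e3]; exact prob_le_one
      norm_num at e4
    rw [hz]; exact zero_le
  · obtain ⟨s, hs, hcard, hcov⟩ := aux_packing P 𝒳 (u / 4) (a * (u / 4) ^ b) hcpos
      (by positivity) (fun x hx => by
        have := hstd x hx (u / 4) (by positivity)
        rwa [min_eq_right hsmall] at this)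
    rw [h4] at hcard
    calc (Measure.pi fun _ : Fin n => P) {X | u ≤ hausdorffDist 𝒳 (Set.range X)}
        ≤ (Measure.pi fun _ : Fin n => P) (⋃ x ∈ s, {X | ∀ j, X j ∉ ball x (u / 2)}) := by
          apply measure_mono_ae
          filter_upwards [hae] with X hX hle
          by_contra hcon
          refine absurd (aux_hd 𝒳 h𝒳c h𝒳ne X u hX ?_) (not_lt.2 hle)
          intro x hx
          obtain ⟨y, hy, hxy⟩ := hcov x hx
          by_contra! hfar
          refine hcon (Set.mem_biUnion (show y ∈ s from hy) ?_)
          intro j hj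
          have h1 := hfar j
          have h2 := dist_triangle x y (X j)
          rw [mem_ball'] at hj
          linarith
      _ ≤ ∑ x ∈ s, (Measure.pi fun _ : Fin n => P) {X | ∀ j, X j ∉ ball x (u / 2)} :=
          measure_biUnion_finset_le _ _
      _ ≤ ∑ x ∈ s, ENNReal.ofReal (Real.exp (-(a * (u / 2) ^ b * n))) :=
          Finset.sum_le_sum fun x hx => aux_miss P x (u / 2) _ (by positivity)
            (hstd x (hs x hx) (u / 2) (by positivity)) n hn.ne'
      _ ≤ _ := by
          rw [Finset.sum_const, nsmul_eq_mul, ← ENNReal.ofReal_natCast,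
            ← ENNReal.ofReal_mul (by positivity)]
          apply ENNReal.ofReal_le_ofReal
          gcongr
end

section
/- Let a > 0 and b ≥ 1, let P be an (a,b)-standard probability measure on ℝ^D with compact support 𝒳, let n ≥ 2, and set δ_n = 8 (2 log(n) / (a n))^{1/b}. If X_1, …, X_n are independent random points drawn from P, then P(d_H(𝒳, {X_1, …, X_n}) > δ_n / 4) ≤ min{1, 2^b / (2 n log(n))}. -/
open MeasureTheory Metric

/-- Packing: a finite maximal `s`-separated subset. -/
lemma exists_net_aux {E : Type*} [MetricSpace E] [MeasurableSpace E] [BorelSpace E]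
    (P : Measure E) [IsProbabilityMeasure P] (𝒳 : Set E) (s q : ℝ) (hq : 0 < q)
    (h : ∀ x ∈ 𝒳, ENNReal.ofReal q ≤ P (ball x (s / 2))) :
    ∃ F : Finset E, (F.card : ℝ) ≤ 1 / q ∧ ∀ x ∈ 𝒳, ∃ y ∈ F, y ∈ 𝒳 ∧ dist x y < s ∨ x = y := by
  classical
  let G : Finset E → Prop := fun F =>
    (∀ x ∈ F, x ∈ 𝒳) ∧ ∀ x ∈ F, ∀ y ∈ F, x ≠ y → s ≤ dist x y
  have hcard : ∀ F, G F → (F.card : ℝ) ≤ 1 / q := by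
    intro F hF
    have h1 : P (⋃ x ∈ F, ball x (s / 2)) = ∑ x ∈ F, P (ball x (s / 2)) := by
      apply measure_biUnion_finset
      · intro x hx y hy hxy
        apply ball_disjoint_ball
        have := hF.2 x hx y hy hxy
        linarith
      · intro x _
        exact measurableSet_ball
    have h2 : ∑ x ∈ F, ENNReal.ofReal q ≤ 1 := by
      refine (Finset.sum_le_sum fun x hx => h x (hF.1 x hx)).trans ?_
      rw [← h1]
      exact prob_le_one
    rw [Finset.sum_const, nsmul_eq_mul, ← ENNReal.ofReal_natCast,
      ← ENNReal.ofReal_mul (by positivity), ENNReal.ofReal_le_one] at h2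
    rw [le_div_iff₀ hq]
    exact h2
  let S : Set ℕ := {k | ∃ F, G F ∧ F.card = k}
  have hne : S.Nonempty := ⟨0, ∅, by simp [G], by simp⟩
  have hbd : BddAbove S := by
    refine ⟨⌊1 / q⌋₊, ?_⟩
    rintro k ⟨F, hF, rfl⟩
    exact Nat.le_floor (hcard F hF)
  obtain ⟨F, hF, hFk⟩ := Nat.sSup_mem hne hbd
  refine ⟨F, hcard F hF, ?_⟩
  intro x hx
  by_contra! hcon
  have hxF : x ∉ F := fun hxF => (hcon x hxF).2 rfl
  have hG : G (insert x F) := by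
    constructor
    · intro y hy
      rcases Finset.mem_insert.1 hy with rfl | hy
      · exact hx
      · exact hF.1 y hy
    · intro y hy z hz hyz
      rcases Finset.mem_insert.1 hy with rfl | hy2 <;> rcases Finset.mem_insert.1 hz with rfl | hz2
      · exact absurd rfl hyz
      · exact (hcon z hz2).1 (hF.1 z hz2)
      · rw [dist_comm]
        exact (hcon y hy2).1 (hF.1 y hy2)
      · exact hF.2 y hy2 z hz2 hyz
  have h3 : (insert x F).card ≤ sSup S := le_csSup hbd ⟨_, hG, rfl⟩
  rw [Finset.card_insert_of_notMem hxF] at h3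
  omega

/-- For an `(a,b)`-standard probability measure `P` on `ℝ^D` with compact
support `𝒳`, `n ≥ 2`, and `δ_n = 8 (2 log n / (a n))^{1/b}`, if `X_1, …, X_n` are i.i.d.
from `P`, then `P(d_H(𝒳, {X_1,…,X_n}) > δ_n / 4) ≤ min {1, 2^b / (2 n log n)}`. -/
theorem hausdorff_tail_bound_deltaN {D : ℕ} (a b : ℝ) (ha : 0 < a) (hb : 1 ≤ b)
    (P : Measure (EuclideanSpace ℝ (Fin D))) [IsProbabilityMeasure P]
    (𝒳 : Set (EuclideanSpace ℝ (Fin D))) (h𝒳c : IsCompact 𝒳) (h𝒳ne : 𝒳.Nonempty)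
    (hP𝒳 : P 𝒳 = 1)
    (hstd : ∀ x ∈ 𝒳, ∀ t : ℝ, 0 < t →
      ENNReal.ofReal (min 1 (a * t ^ b)) ≤ P (ball x t))
    (n : ℕ) (hn : 2 ≤ n)
    (δ : ℝ) (hδ : δ = 8 * (2 * Real.log n / (a * n)) ^ (1 / b : ℝ)) :
    (Measure.pi fun _ : Fin n => P) {X | δ / 4 < hausdorffDist 𝒳 (Set.range X)} ≤
      ENNReal.ofReal (min 1 (2 ^ b / (2 * n * Real.log n))) := by
  classical
  have hn' : (2 : ℝ) ≤ n := by exact_mod_cast hn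
  have hn0 : (0 : ℝ) < n := by linarith
  have hlog : 0 < Real.log n := Real.log_pos (by linarith)
  set s : ℝ := (2 * Real.log n / (a * n)) ^ (1 / b : ℝ) with hs
  have hs0 : 0 < s := by positivity
  have hb0 : b ≠ 0 := by linarith
  have hsb : a * s ^ b = 2 * Real.log n / n := by
    rw [hs, ← Real.rpow_mul (by positivity), one_div_mul_cancel hb0, Real.rpow_one]
    field_simp
  have hlogle : 2 * Real.log n / n ≤ 1 := by
    rw [div_le_one hn0]
    have h1 := Real.log_le_sub_one_of_pos (x := n / 2) (by linarith)
    rw [Real.log_div hn0.ne' (by norm_num)] at h1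
    have h2 := Real.log_two_lt_d9
    linarith
  have h2b : (1 : ℝ) ≤ 2 ^ b := Real.one_le_rpow (by norm_num) (by linarith)
  have hsb2 : a * (s / 2) ^ b = 2 * Real.log n / n / 2 ^ b := by
    rw [Real.div_rpow hs0.le (by norm_num), ← hsb, mul_div_assoc]
  set y : ℝ := 2 * Real.log n / n with hy
  have hy0 : 0 < y := by positivity
  have hq1 : y / 2 ^ b ≤ 1 := (div_le_self hy0.le h2b).trans hlogle
  obtain ⟨F, hFcard, hFnet⟩ := exists_net_aux P 𝒳 s (y / 2 ^ b) (by positivity) (by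
    intro x hx
    have := hstd x hx (s / 2) (by positivity)
    rwa [hsb2, min_eq_right hq1] at this)
  rw [ENNReal.ofReal_min, ENNReal.ofReal_one]
  refine le_min prob_le_one ?_
  have hae : ∀ᵐ X ∂(Measure.pi fun _ : Fin n => P), ∀ j, X j ∈ 𝒳 := by
    rw [ae_all_iff]
    intro j
    have h1 : ∀ᵐ x ∂P, x ∈ 𝒳 := (mem_ae_iff_prob_eq_one h𝒳c.measurableSet).2 hP𝒳
    exact (measurePreserving_eval (fun _ : Fin n => P) j).quasiMeasurePreserving.ae h1
  let F' := F.filter (· ∈ 𝒳)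
  have hsub : ({X | δ / 4 < hausdorffDist 𝒳 (Set.range X)} : Set (Fin n → _))
      ≤ᵐ[Measure.pi fun _ : Fin n => P] ⋃ z ∈ F', Set.pi Set.univ fun _ => (ball z s)ᶜ := by
    filter_upwards [hae] with X hX hbad
    by_contra hcon
    have hcon' : X ∉ ⋃ z ∈ F', Set.pi Set.univ fun _ => (ball z s)ᶜ := hcon
    have hbad' : δ / 4 < hausdorffDist 𝒳 (Set.range X) := hbad
    simp only [Set.mem_iUnion, Set.mem_pi, Set.mem_univ, true_implies, Set.mem_compl_iff,
      mem_ball, not_exists, not_forall, not_not] at hcon'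
    refine absurd hbad' (not_lt.2 ?_)
    apply hausdorffDist_le_of_mem_dist (by rw [hδ]; positivity)
    · intro x hx
      obtain ⟨z, hz, hzx⟩ := hFnet x hx
      have hz' : z ∈ F' ∧ dist x z < s := by
        rcases hzx with ⟨h1, h2⟩ | rfl
        · exact ⟨Finset.mem_filter.2 ⟨hz, h1⟩, h2⟩
        · exact ⟨Finset.mem_filter.2 ⟨hz, hx⟩, by simpa using hs0⟩
      obtain ⟨j, hj⟩ := hcon' z hz'.1
      refine ⟨X j, ⟨j, rfl⟩, ?_⟩
      have := dist_triangle_right x (X j) z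
      rw [hδ]
      linarith [hz'.2]
    · rintro _ ⟨j, rfl⟩
      exact ⟨X j, hX j, by rw [dist_self, hδ]; positivity⟩
  refine (measure_mono_ae hsub).trans ((measure_biUnion_finset_le _ _).trans ?_)
  have hterm : ∀ z ∈ F', (Measure.pi fun _ : Fin n => P) (Set.pi Set.univ fun _ => (ball z s)ᶜ)
      ≤ ENNReal.ofReal (1 / (n : ℝ) ^ 2) := by
    intro z hz
    have hz𝒳 := (Finset.mem_filter.1 hz).2
    rw [Measure.pi_pi, Finset.prod_const, Finset.card_univ, Fintype.card_fin]
    have h1 : P (ball z s)ᶜ ≤ ENNReal.ofReal (Real.exp (-y)) := by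
      rw [prob_compl_eq_one_sub measurableSet_ball]
      have := hstd z hz𝒳 s hs0
      rw [hsb, min_eq_right hlogle] at this
      refine (tsub_le_tsub_left this 1).trans ?_
      rw [← ENNReal.ofReal_one, ← ENNReal.ofReal_sub _ hy0.le]
      exact ENNReal.ofReal_le_ofReal (Real.one_sub_le_exp_neg y)
    refine (pow_le_pow_left' h1 n).trans ?_
    rw [← ENNReal.ofReal_pow (Real.exp_pos _).le, ← Real.exp_nat_mul]
    apply ENNReal.ofReal_le_ofReal
    have h2 : (n : ℝ) * -y = -(Real.log ((n : ℝ) ^ 2)) := by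
      rw [Real.log_pow, hy]
      field_simp
      norm_num
    rw [h2, Real.exp_neg, Real.exp_log (by positivity), one_div]
  refine (Finset.sum_le_sum hterm).trans ?_
  rw [Finset.sum_const, nsmul_eq_mul, ← ENNReal.ofReal_natCast,
      ← ENNReal.ofReal_mul (by positivity)]
  apply ENNReal.ofReal_le_ofReal
  have hc : (F'.card : ℝ) ≤ 1 / (y / 2 ^ b) :=
    le_trans (by exact_mod_cast Finset.card_filter_le _ _) hFcard
  refine (mul_le_mul_of_nonneg_right hc (by positivity)).trans (le_of_eq ?_)
  rw [hy]
  field_simp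
end

section
/- Let P be a probability measure on ℝ^D with compact support 𝒳, let u > 0, and suppose there exist points c_1, …, c_N ∈ ℝ^D and a number p ∈ (0,1] such that 𝒳 ⊆ ∪_{i=1}^N B(c_i, u/2) and P(B(c_i, u/2)) ≥ p for every i. If X_1, …, X_n are independent random points drawn from P, then P(d_H(𝒳, {X_1, …, X_n}) ≥ u) ≤ N (1 − p)^n. -/
open MeasureTheory Metric

/-- Let `P` be a probability measure on `ℝ^D` with compact support `𝒳`,
`u > 0`, and suppose `c_1, …, c_N ∈ ℝ^D` and `p ∈ (0,1]` are such that
`𝒳 ⊆ ∪ᵢ B(cᵢ, u/2)` and `P(B(cᵢ, u/2)) ≥ p` for every `i`. If `X_1, …, X_n` are i.i.d.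
from `P`, then `P(d_H(𝒳, {X_1,…,X_n}) ≥ u) ≤ N (1 − p)^n`. -/
theorem hausdorff_covering_bound {D N : ℕ}
    (P : Measure (EuclideanSpace ℝ (Fin D))) [IsProbabilityMeasure P]
    (𝒳 : Set (EuclideanSpace ℝ (Fin D))) (h𝒳c : IsCompact 𝒳) (h𝒳ne : 𝒳.Nonempty)
    (hP𝒳 : P 𝒳 = 1)
    (hsupp : ∀ x ∈ 𝒳, ∀ r : ℝ, 0 < r → 0 < P (ball x r))
    (u : ℝ) (hu : 0 < u)
    (c : Fin N → EuclideanSpace ℝ (Fin D)) (p : ℝ) (hp0 : 0 < p) (hp1 : p ≤ 1)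
    (hcov : 𝒳 ⊆ ⋃ i, ball (c i) (u / 2))
    (hmass : ∀ i, ENNReal.ofReal p ≤ P (ball (c i) (u / 2)))
    (n : ℕ) :
    (Measure.pi fun _ : Fin n => P) {X | u ≤ hausdorffDist 𝒳 (Set.range X)} ≤
      ENNReal.ofReal (N * (1 - p) ^ n) := by
  have hXae : ∀ᵐ X ∂(Measure.pi fun _ : Fin n => P), ∀ j, X j ∈ 𝒳 := by
    rw [ae_all_iff]
    intro j
    have h1 : ∀ᵐ x ∂P, x ∈ 𝒳 := by
      rw [← prob_compl_eq_zero_iff h𝒳c.measurableSet] at hP𝒳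
      exact hP𝒳
    exact (Measure.tendsto_eval_ae_ae (μ := fun _ : Fin n => P) (i := j)).eventually h1
  have hle : (Measure.pi fun _ : Fin n => P) {X | u ≤ hausdorffDist 𝒳 (Set.range X)} ≤
      (Measure.pi fun _ : Fin n => P)
        (⋃ i, Set.pi Set.univ fun _ : Fin n => (ball (c i) (u / 2))ᶜ) := by
    apply measure_mono_ae
    filter_upwards [hXae] with X hX hXu
    by_contra hcon
    have hhit : ∀ i, ∃ j, X j ∈ ball (c i) (u / 2) := by
      intro i
      by_contra hno
      push Not at hno
      exact hcon (Set.mem_iUnion.2 ⟨i, fun j _ => hno j⟩)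
    obtain ⟨x0, hx0, hmax⟩ := h𝒳c.exists_isMaxOn h𝒳ne
      (continuous_infDist_pt (Set.range X)).continuousOn
    have hlt : ∀ x ∈ 𝒳, infDist x (Set.range X) < u := by
      intro x hx
      obtain ⟨i, hi⟩ := Set.mem_iUnion.1 (hcov hx)
      obtain ⟨j, hj⟩ := hhit i
      have h1 := infDist_le_dist_of_mem (x := x) (Set.mem_range_self (f := X) j)
      have h2 := dist_triangle_right x (X j) (c i)
      rw [mem_ball] at hi hj
      linarith
    have hd : hausdorffDist 𝒳 (Set.range X) ≤ infDist x0 (Set.range X) := by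
      apply hausdorffDist_le_of_infDist infDist_nonneg
      · intro x hx
        exact hmax hx
      · rintro _ ⟨j, rfl⟩
        rw [infDist_zero_of_mem (hX j)]
        exact infDist_nonneg
    exact absurd (hXu.trans hd) (not_le.2 (hlt x0 hx0))
  refine hle.trans ((measure_iUnion_le _).trans ?_)
  have hi : ∀ i, (Measure.pi fun _ : Fin n => P)
      (Set.pi Set.univ fun _ : Fin n => (ball (c i) (u / 2))ᶜ) ≤
      ENNReal.ofReal ((1 - p) ^ n) := by
    intro i
    rw [Measure.pi_pi, Finset.prod_const, Finset.card_univ, Fintype.card_fin,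
      ENNReal.ofReal_pow (by linarith), prob_compl_eq_one_sub measurableSet_ball,
      ENNReal.ofReal_sub _ hp0.le, ENNReal.ofReal_one]
    gcongr
    exact hmass i
  rw [tsum_fintype]
  refine (Finset.sum_le_sum fun i _ => hi i).trans ?_
  rw [Finset.sum_const, Finset.card_univ, Fintype.card_fin, nsmul_eq_mul,
    ENNReal.ofReal_mul (by positivity), ENNReal.ofReal_natCast]
end

section
/- (Le Cam's Lemma.) Let (E, ℰ) be a measurable space, let P₀ and P₁ be two probability measures on (E, ℰ), let (M, ρ) be a pseudometric space, let θ₀, θ₁ ∈ M, and let θ̂ : Eⁿ → M be a measurable map (an estimator based on n observations) such that x ↦ ρ(θ_i, θ̂(x)) is measurable for i = 0, 1. Then max{ E_{P₀ⁿ}[ρ(θ₀, θ̂)], E_{P₁ⁿ}[ρ(θ₁, θ̂)] } ≥ (1/8) · ρ(θ₀, θ₁) · (1 − TV(P₀, P₁))^{2n}, where TV(P₀, P₁) = sup_{B ∈ ℰ} |P₀(B) − P₁(B)| is the total variation distance. In particular, the supremum over {P₀, P₁} of the expected risk E_{Pⁿ}[ρ(θ(P), θ̂)] is bounded below by (1/8)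 ρ(θ₀, θ₁)(1 − TV(P₀, P₁))^{2n}. -/
open MeasureTheory Metric

lemma lecam_pi_mono {E : Type*} [MeasurableSpace E] (μ ν : Measure E) [IsFiniteMeasure μ]
    (h : μ ≤ ν) (n : ℕ) :
    Measure.pi (fun _ : Fin n => μ) ≤ Measure.pi (fun _ : Fin n => ν) := by
  have key : (Measure.pi (fun _ : Fin n => μ)).toOuterMeasure ≤
      OuterMeasure.pi (fun _ : Fin n => ν.toOuterMeasure) := by
    rw [OuterMeasure.le_pi]
    intro s _
    change (Measure.pi (fun _ : Fin n => μ)) _ ≤ _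
    rw [Measure.pi_pi]
    exact Finset.prod_le_prod' fun i _ => h (s i)
  refine Measure.le_iff.2 fun s hs => ?_
  refine (key s).trans ?_
  rw [Measure.pi]
  exact le_toMeasure_apply _ _ s

lemma lecam_inf {E : Type*} [MeasurableSpace E]
    (P₀ P₁ : Measure E) [IsProbabilityMeasure P₀] [IsProbabilityMeasure P₁] :
    ∃ ν : Measure E, IsFiniteMeasure ν ∧ ν ≤ P₀ ∧ ν ≤ P₁ ∧
      ENNReal.ofReal (1 - ⨆ B : {B : Set E // MeasurableSet B},
            |(P₀ B.1).toReal - (P₁ B.1).toReal|) ≤ ν Set.univ := by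
  obtain ⟨S, hS, h1, h2⟩ := hahn_decomposition P₀ P₁
  refine ⟨P₁.restrict S + P₀.restrict Sᶜ, inferInstance, ?_, ?_, ?_⟩
  · refine Measure.le_iff.2 fun s hs => ?_
    rw [Measure.add_apply, Measure.restrict_apply hs, Measure.restrict_apply hs,
      ← measure_inter_add_sdiff s hS (μ := P₀), Set.sdiff_eq]
    exact add_le_add (h1 _ (hs.inter hS) Set.inter_subset_right) le_rfl
  · refine Measure.le_iff.2 fun s hs => ?_
    rw [Measure.add_apply, Measure.restrict_apply hs, Measure.restrict_apply hs,
      ← measure_inter_add_sdiff s hS (μ := P₁), Set.sdiff_eq]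
    exact add_le_add le_rfl (h2 _ (hs.inter hS.compl) Set.inter_subset_right)
  · have hb : BddAbove (Set.range fun B : {B : Set E // MeasurableSet B} =>
        |(P₀ B.1).toReal - (P₁ B.1).toReal|) := by
      refine ⟨1, ?_⟩
      rintro _ ⟨B, rfl⟩
      have a0 : (P₀ B.1).toReal ≤ 1 := measureReal_le_one
      have a1 : (P₁ B.1).toReal ≤ 1 := measureReal_le_one
      have b0 : 0 ≤ (P₀ B.1).toReal := ENNReal.toReal_nonneg
      have b1 : 0 ≤ (P₁ B.1).toReal := ENNReal.toReal_nonneg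
      exact abs_le.2 ⟨by linarith, by linarith⟩
    have hle := (le_abs_self _).trans (le_ciSup hb ⟨S, hS⟩)
    simp only at hle
    have hc : (P₀ Sᶜ).toReal = 1 - (P₀ S).toReal := probReal_compl_eq_one_sub hS
    rw [Measure.add_apply, Measure.restrict_apply_univ, Measure.restrict_apply_univ]
    rw [ENNReal.ofReal_le_iff_le_toReal (by finiteness),
      ENNReal.toReal_add (by finiteness) (by finiteness), hc]
    linarith

/-- **Le Cam's Lemma.** For probability measures `P₀, P₁` on a measurable
space `E`, points `θ₀, θ₁` in a pseudometric space `M`, and an estimator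
`est : Eⁿ → M`, the maximum of the two expected risks `E_{Pᵢⁿ}[ρ(θᵢ, est)]` is at least
`(1/8) ρ(θ₀, θ₁) (1 − TV(P₀, P₁))^{2n}`, where
`TV(P₀, P₁) = sup_{B measurable} |P₀(B) − P₁(B)|`. -/
theorem le_cam_lemma {E : Type*} [MeasurableSpace E]
    (P₀ P₁ : Measure E) [IsProbabilityMeasure P₀] [IsProbabilityMeasure P₁]
    {M : Type*} [PseudoMetricSpace M] (θ₀ θ₁ : M) (n : ℕ)
    (est : (Fin n → E) → M)
    (hm0 : Measurable fun x => dist θ₀ (est x))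
    (hm1 : Measurable fun x => dist θ₁ (est x)) :
    ENNReal.ofReal ((1 / 8) * dist θ₀ θ₁ *
        (1 - ⨆ B : {B : Set E // MeasurableSet B},
            |(P₀ B.1).toReal - (P₁ B.1).toReal|) ^ (2 * n)) ≤
      max (∫⁻ x, ENNReal.ofReal (dist θ₀ (est x)) ∂(Measure.pi fun _ : Fin n => P₀))
        (∫⁻ x, ENNReal.ofReal (dist θ₁ (est x)) ∂(Measure.pi fun _ : Fin n => P₁)) := by
  obtain ⟨ν, hν, hν0, hν1, hmass⟩ := lecam_inf P₀ P₁
  have hT0 : 0 ≤ ⨆ B : {B : Set E // MeasurableSet B},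
      |(P₀ B.1).toReal - (P₁ B.1).toReal| := Real.iSup_nonneg fun _ => abs_nonneg _
  have hT1 : (⨆ B : {B : Set E // MeasurableSet B},
      |(P₀ B.1).toReal - (P₁ B.1).toReal|) ≤ 1 := by
    refine Real.iSup_le (fun B => ?_) zero_le_one
    have a0 : (P₀ B.1).toReal ≤ 1 := measureReal_le_one
    have a1 : (P₁ B.1).toReal ≤ 1 := measureReal_le_one
    have b0 : 0 ≤ (P₀ B.1).toReal := ENNReal.toReal_nonneg
    have b1 : 0 ≤ (P₁ B.1).toReal := ENNReal.toReal_nonneg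
    exact abs_le.2 ⟨by linarith, by linarith⟩
  generalize (⨆ B : {B : Set E // MeasurableSet B},
      |(P₀ B.1).toReal - (P₁ B.1).toReal|) = T at *
  set R₀ := ∫⁻ x, ENNReal.ofReal (dist θ₀ (est x)) ∂(Measure.pi fun _ : Fin n => P₀)
  set R₁ := ∫⁻ x, ENNReal.ofReal (dist θ₁ (est x)) ∂(Measure.pi fun _ : Fin n => P₁)
  have hsum : ENNReal.ofReal (dist θ₀ θ₁ * (1 - T) ^ n) ≤ R₀ + R₁ := by
    calc ENNReal.ofReal (dist θ₀ θ₁ * (1 - T) ^ n)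
        = ENNReal.ofReal (dist θ₀ θ₁) * ENNReal.ofReal (1 - T) ^ n := by
          rw [ENNReal.ofReal_mul dist_nonneg, ENNReal.ofReal_pow (by linarith)]
      _ ≤ ENNReal.ofReal (dist θ₀ θ₁) * (ν Set.univ) ^ n := by gcongr
      _ = ∫⁻ _, ENNReal.ofReal (dist θ₀ θ₁) ∂(Measure.pi fun _ : Fin n => ν) := by
          rw [lintegral_const, Measure.pi_univ]; simp
      _ ≤ ∫⁻ x, (ENNReal.ofReal (dist θ₀ (est x)) + ENNReal.ofReal (dist θ₁ (est x)))
            ∂(Measure.pi fun _ : Fin n => ν) := by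
          refine lintegral_mono fun x => ?_
          rw [← ENNReal.ofReal_add dist_nonneg dist_nonneg]
          exact ENNReal.ofReal_le_ofReal (dist_triangle_right _ _ _ |>.trans
            (by rw [dist_comm θ₀, dist_comm θ₁, dist_comm _ θ₀, dist_comm _ θ₁]))
      _ = _ := lintegral_add_left hm0.ennreal_ofReal _
      _ ≤ R₀ + R₁ := add_le_add
          (lintegral_mono' (lecam_pi_mono ν P₀ hν0 n) le_rfl)
          (lintegral_mono' (lecam_pi_mono ν P₁ hν1 n) le_rfl)
  have hpow : (1 - T) ^ (2 * n) ≤ (1 - T) ^ n :=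
    pow_le_pow_of_le_one (by linarith) (by linarith) (by omega)
  have hmax : R₀ + R₁ ≤ 2 * max R₀ R₁ := by
    rw [two_mul]; exact add_le_add (le_max_left _ _) (le_max_right _ _)
  have h2 : 2 * ENNReal.ofReal ((1 / 8) * dist θ₀ θ₁ * (1 - T) ^ (2 * n)) ≤
      2 * max R₀ R₁ := by
    refine le_trans ?_ (hsum.trans hmax)
    rw [← ENNReal.ofReal_ofNat 2, ← ENNReal.ofReal_mul (by norm_num)]
    refine ENNReal.ofReal_le_ofReal ?_
    have h3 := mul_le_mul_of_nonneg_left hpow (dist_nonneg (x := θ₀) (y := θ₁))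
    have h4 : 0 ≤ dist θ₀ θ₁ * (1 - T) ^ (2 * n) :=
      mul_nonneg dist_nonneg (pow_nonneg (by linarith) _)
    linarith
  exact (ENNReal.mul_le_mul_iff_right (by norm_num) (by norm_num)).1 h2
end

section
/- Let a > 0, b ≥ 1 and n ≥ 1 be an integer, set L = (a n)^{−1/b}, and let P = (1 − 1/n) δ₀ + (1/n) U([0, L]) be the probability measure on ℝ given by the mixture of the Dirac mass at 0 and the uniform distribution on the interval [0, L]. Then P is (a,b)-standard on its support: for every x ∈ [0, L] and every r > 0, P(B(x, r)) ≥ min(1, a r^b). -/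
open MeasureTheory Metric

/-- Let `a > 0`, `b ≥ 1`, `n ≥ 1`, `L = (a n)^{−1/b}`, and let
`P = (1 − 1/n) δ₀ + (1/n) U([0, L])` be the mixture of the Dirac mass at `0` and the
uniform distribution on `[0, L]`. Then `P` is `(a,b)`-standard on its support `[0, L]`:
for every `x ∈ [0, L]` and `r > 0`, `P(B(x, r)) ≥ min(1, a r^b)`. -/
theorem mixture_is_standard (a b : ℝ) (ha : 0 < a) (hb : 1 ≤ b) (n : ℕ) (hn : 1 ≤ n)
    (L : ℝ) (hL : L = (a * n) ^ (-(1 / b) : ℝ))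
    (U : Measure ℝ) (hU : U = (ENNReal.ofReal L)⁻¹ • volume.restrict (Set.Icc 0 L))
    (P : Measure ℝ)
    (hP : P = ENNReal.ofReal (1 - 1 / (n : ℝ)) • Measure.dirac (0 : ℝ) +
        ENNReal.ofReal (1 / (n : ℝ)) • U) :
    ∀ x ∈ Set.Icc (0 : ℝ) L, ∀ r : ℝ, 0 < r →
      ENNReal.ofReal (min 1 (a * r ^ b)) ≤ P (ball x r) := by
  intro x hx r hr
  have hn0 : (0 : ℝ) < n := by exact_mod_cast hn
  have hb0 : b ≠ 0 := by linarith
  have han : 0 < a * n := mul_pos ha hn0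
  have hL0 : 0 < L := hL ▸ Real.rpow_pos_of_pos han _
  have hLb : L ^ b = (a * n)⁻¹ := by
    rw [hL, ← Real.rpow_mul han.le]
    have : -(1 / b) * b = -1 := by field_simp
    rw [this, Real.rpow_neg_one]
  have hU' : U (ball x r) = (ENNReal.ofReal L)⁻¹ * volume (ball x r ∩ Set.Icc 0 L) := by
    rw [hU, Measure.smul_apply, Measure.restrict_apply measurableSet_ball, smul_eq_mul]
  obtain ⟨hx0, hxL⟩ := hx
  have hPb : P (ball x r) = ENNReal.ofReal (1 - 1 / (n : ℝ)) * Measure.dirac (0 : ℝ) (ball x r) +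
      ENNReal.ofReal (1 / (n : ℝ)) * U (ball x r) := by
    rw [hP]; simp only [Measure.add_apply, Measure.smul_apply, smul_eq_mul]
  have hn1 : 1 / (n : ℝ) ≤ 1 := by
    rw [div_le_one hn0]; exact_mod_cast hn
  rcases le_or_gt r L with hrL | hrL
  · have hvol : ENNReal.ofReal r ≤ volume (ball x r ∩ Set.Icc 0 L) := by
      have hsub : Set.Ioo (max 0 (x - r)) (min L (x + r)) ⊆ ball x r ∩ Set.Icc 0 L := by
        intro y hy
        obtain ⟨h1, h2⟩ := hy
        rw [max_lt_iff] at h1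
        rw [lt_min_iff] at h2
        rw [Real.ball_eq_Ioo]
        exact ⟨⟨h1.2, h2.2⟩, h1.1.le, h2.1.le⟩
      refine le_trans ?_ (measure_mono hsub)
      rw [Real.volume_Ioo]
      apply ENNReal.ofReal_le_ofReal
      rcases max_cases 0 (x - r) with h | h <;> rcases min_cases L (x + r) with h' | h' <;> linarith
    have hkey : a * r ^ b ≤ 1 / n * (L⁻¹ * r) := by
      have h1 : (r / L) ^ b ≤ r / L := by
        have := Real.rpow_le_rpow_of_exponent_ge (div_pos hr hL0) ((div_le_one hL0).2 hrL) hb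
        rwa [Real.rpow_one] at this
      rw [Real.div_rpow hr.le hL0.le, hLb] at h1
      have h2 : r ^ b / (a * n)⁻¹ = a * r ^ b * n := by field_simp
      rw [h2] at h1
      have h3 : 1 / (n : ℝ) * (L⁻¹ * r) = (r / L) / n := by field_simp
      rw [h3, le_div_iff₀ hn0]
      exact h1
    rw [hPb, hU']
    refine le_trans ?_ le_add_self
    calc ENNReal.ofReal (min 1 (a * r ^ b)) ≤ ENNReal.ofReal (1 / n * (L⁻¹ * r)) :=
          ENNReal.ofReal_le_ofReal ((min_le_right _ _).trans hkey)
      _ = ENNReal.ofReal (1 / (n : ℝ)) * ((ENNReal.ofReal L)⁻¹ * ENNReal.ofReal r) := by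
          rw [ENNReal.ofReal_mul (by positivity), ENNReal.ofReal_mul (by positivity),
            ENNReal.ofReal_inv_of_pos hL0]
      _ ≤ _ := by gcongr
  · have hint : ball x r ∩ Set.Icc 0 L = Set.Icc 0 L := by
      apply Set.inter_eq_right.2
      rw [Real.ball_eq_Ioo]
      rintro y ⟨h1, h2⟩
      constructor <;> linarith
    have h0 : (0 : ℝ) ∈ ball x r := by
      rw [Real.ball_eq_Ioo]; constructor <;> linarith
    have hone : P (ball x r) = 1 := by
      rw [hPb, hU', hint, Real.volume_Icc, sub_zero, Measure.dirac_apply_of_mem h0,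
        ENNReal.inv_mul_cancel (by simpa using hL0) ENNReal.ofReal_ne_top, mul_one, mul_one,
        ← ENNReal.ofReal_add (by linarith) (by positivity)]
      simp
    rw [hone]
    exact ENNReal.ofReal_le_one.2 (min_le_left _ _)
end

section
/- Let a > 0 and b ≥ 1, and let P be an (a,b)-standard probability measure on ℝ^D with compact support 𝒳. Then there exists a constant C, depending only on a and b, such that for every integer n ≥ 2, if X_1, …, X_n are independent random points drawn from P, then E[d_H(𝒳, {X_1, …, X_n})] ≤ C (log(n) / n)^{1/b}. -/
open MeasureTheory Metric

lemma aux_net {D : ℕ} (P : Measure (EuclideanSpace ℝ (Fin D))) [IsProbabilityMeasure P]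
    (X : Set (EuclideanSpace ℝ (Fin D))) (t m : ℝ) (ht : 0 < t) (hm : 0 < m)
    (h : ∀ x ∈ X, ENNReal.ofReal m ≤ P (ball x (t / 2))) :
    ∃ S : Finset (EuclideanSpace ℝ (Fin D)), (∀ c ∈ S, c ∈ X) ∧ (S.card : ℝ) * m ≤ 1 ∧
      ∀ x ∈ X, ∃ c ∈ S, dist x c < t := by
  classical
  let Q : Finset (EuclideanSpace ℝ (Fin D)) → Prop := fun S =>
    (∀ c ∈ S, c ∈ X) ∧ ∀ c ∈ S, ∀ d ∈ S, c ≠ d → t ≤ dist c d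
  have hcard : ∀ S, Q S → (S.card : ℝ) * m ≤ 1 := by
    intro S hS
    have h1 : P (⋃ c ∈ S, ball c (t / 2)) = ∑ c ∈ S, P (ball c (t / 2)) := by
      apply measure_biUnion_finset
      · intro c hc d hd hcd
        apply ball_disjoint_ball
        have := hS.2 c hc d hd hcd
        linarith
      · intro c _
        exact measurableSet_ball
    have h2 : ∑ c ∈ S, ENNReal.ofReal m ≤ ∑ c ∈ S, P (ball c (t / 2)) :=
      Finset.sum_le_sum fun c hc => h c (hS.1 c hc)
    have h3 : (S.card : ENNReal) * ENNReal.ofReal m ≤ 1 := by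
      rw [Finset.sum_const, nsmul_eq_mul] at h2
      exact h2.trans (h1 ▸ prob_le_one)
    rw [← ENNReal.ofReal_natCast, ← ENNReal.ofReal_mul (by positivity)] at h3
    exact ENNReal.ofReal_le_one.mp h3
  have hex : ∃ k, ∃ S, Q S ∧ S.card = k := ⟨0, ∅, by simp [Q], rfl⟩
  have hbd : ∀ k, (∃ S, Q S ∧ S.card = k) → k ≤ ⌊1 / m⌋₊ := by
    rintro k ⟨S, hS, rfl⟩
    apply Nat.le_floor
    rw [le_div_iff₀ hm]
    exact hcard S hS
  obtain ⟨k0, hk0⟩ := hex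
  obtain ⟨S, hS, hSc⟩ := Nat.findGreatest_spec (P := fun k => ∃ S, Q S ∧ S.card = k) (hbd k0 hk0) hk0
  refine ⟨S, hS.1, hcard S hS, ?_⟩
  intro x hx
  by_contra! hcon
  have hxS : x ∉ S := by
    intro hxS
    have := hcon x hxS
    simp at this
    linarith
  have hQ : Q (insert x S) := by
    constructor
    · intro c hc
      rcases Finset.mem_insert.mp hc with rfl | hc
      · exact hx
      · exact hS.1 c hc
    · intro c hc d hd hcd
      rcases Finset.mem_insert.mp hc with hc1 | hc1 <;>
        rcases Finset.mem_insert.mp hd with hd1 | hd1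
      · exact absurd (hc1.trans hd1.symm) hcd
      · rw [hc1]; exact hcon d hd1
      · rw [hd1, dist_comm]; exact hcon c hc1
      · exact hS.2 c hc1 d hd1 hcd
  have hP : ∃ S', Q S' ∧ S'.card = S.card + 1 := ⟨_, hQ, Finset.card_insert_of_notMem hxS⟩
  have := Nat.le_findGreatest (P := fun k => ∃ S, Q S ∧ S.card = k) (hbd _ hP) hP
  omega

lemma aux_diam {D : ℕ} (P : Measure (EuclideanSpace ℝ (Fin D))) [IsProbabilityMeasure P]
    (X : Set (EuclideanSpace ℝ (Fin D))) (t : ℝ)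
    (h : ∀ x ∈ X, 1 ≤ P (ball x t)) : ∀ x ∈ X, ∀ y ∈ X, dist x y ≤ 2 * t := by
  intro x hx y hy
  have h1 : ∀ᵐ z ∂P, z ∈ ball x t :=
    (prob_compl_eq_zero_iff measurableSet_ball).mpr (le_antisymm prob_le_one (h x hx))
  have h2 : ∀ᵐ z ∂P, z ∈ ball y t :=
    (prob_compl_eq_zero_iff measurableSet_ball).mpr (le_antisymm prob_le_one (h y hy))
  obtain ⟨z, hz1, hz2⟩ := (h1.and h2).exists
  rw [mem_ball] at hz1 hz2
  have := dist_triangle_left x y z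
  linarith

lemma aux_bad {D n : ℕ} (P : Measure (EuclideanSpace ℝ (Fin D))) [IsProbabilityMeasure P]
    (c : EuclideanSpace ℝ (Fin D)) (t p : ℝ) (hp : 0 ≤ p) (h : ENNReal.ofReal p ≤ P (ball c t)) :
    (Measure.pi fun _ : Fin n => P) {x | ∀ j, x j ∉ ball c t} ≤
      ENNReal.ofReal (Real.exp (-(n * p))) := by
  have e : {x : Fin n → EuclideanSpace ℝ (Fin D) | ∀ j, x j ∉ ball c t} =
      Set.univ.pi fun _ => (ball c t)ᶜ := by ext; simp
  rw [e, Measure.pi_pi, Finset.prod_const, Finset.card_univ, Fintype.card_fin]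
  have h1 : P (ball c t)ᶜ ≤ ENNReal.ofReal (Real.exp (-p)) := by
    rw [prob_compl_eq_one_sub measurableSet_ball]
    calc 1 - P (ball c t) ≤ 1 - ENNReal.ofReal p := tsub_le_tsub_left h 1
      _ = ENNReal.ofReal (1 - p) := by rw [ENNReal.ofReal_sub _ hp, ENNReal.ofReal_one]
      _ ≤ _ := ENNReal.ofReal_le_ofReal (Real.one_sub_le_exp_neg p)
  calc _ ≤ ENNReal.ofReal (Real.exp (-p)) ^ n := pow_le_pow_left' h1 n
    _ = _ := by
      rw [← ENNReal.ofReal_pow (Real.exp_pos _).le, ← Real.exp_nat_mul]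
      congr 2; ring

/-- Let `a > 0` and `b ≥ 1`. There exists a constant `C`, depending only
on `a` and `b`, such that for every `(a,b)`-standard probability measure `P` on `ℝ^D` with
compact support `𝒳` and every `n ≥ 2`, if `X_1, …, X_n` are i.i.d. from `P` then
`E[d_H(𝒳, {X_1,…,X_n})] ≤ C (log n / n)^{1/b}`. -/
theorem expected_hausdorff_bound (a b : ℝ) (ha : 0 < a) (hb : 1 ≤ b) :
    ∃ C : ℝ, ∀ (D : ℕ) (P : Measure (EuclideanSpace ℝ (Fin D))),
      IsProbabilityMeasure P →
      ∀ 𝒳 : Set (EuclideanSpace ℝ (Fin D)), IsCompact 𝒳 → 𝒳.Nonempty → P 𝒳 = 1 →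
      (∀ x ∈ 𝒳, ∀ t : ℝ, 0 < t →
        ENNReal.ofReal (min 1 (a * t ^ b)) ≤ P (ball x t)) →
      ∀ n : ℕ, 2 ≤ n →
        (∫⁻ x, ENNReal.ofReal (hausdorffDist 𝒳 (Set.range x))
            ∂(Measure.pi fun _ : Fin n => P)) ≤
          ENNReal.ofReal (C * (Real.log n / n) ^ (1 / b : ℝ)) := by
  refine ⟨2 * (2 / a) ^ (1 / b) + 4 * 2 ^ b * (1 / a) ^ (1 / b), ?_⟩
  intro D P hP X hX hne hPX hstd n hn
  have hb0 : 0 < b := by linarith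
  set t0 : ℝ := (1 / a) ^ (1 / b) with ht0
  have ht0pos : 0 < t0 := by positivity
  have ht0b : a * t0 ^ b = 1 := by
    rw [ht0, ← Real.rpow_mul (by positivity), one_div_mul_cancel hb0.ne', Real.rpow_one]
    field_simp
  have hn2 : (2 : ℝ) ≤ n := by exact_mod_cast hn
  have hn0 : (0 : ℝ) < n := by linarith
  set l := Real.log n with hl
  have hl2 : 1 / 2 ≤ l := by
    have := Real.log_two_gt_d9
    have h2 := Real.log_le_log (by norm_num) hn2
    linarith
  have hln : l ≤ n := (Real.log_le_sub_one_of_pos hn0).trans (by linarith)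
  have hL0 : 0 < l / n := by positivity
  have hL1 : l / n ≤ 1 := (div_le_one hn0).mpr hln
  have hLL : l / n ≤ (l / n) ^ (1 / b) := by
    conv_lhs => rw [← Real.rpow_one (l / n)]
    apply Real.rpow_le_rpow_of_exponent_ge hL0 hL1
    rw [div_le_one hb0]; exact hb
  set t : ℝ := (2 / a) ^ (1 / b) * (l / n) ^ (1 / b) with ht
  have htpos : 0 < t := by positivity
  have htb : a * t ^ b = 2 * (l / n) := by
    rw [ht, ← Real.mul_rpow (by positivity) (by positivity), ← Real.rpow_mul (by positivity),
      one_div_mul_cancel hb0.ne', Real.rpow_one]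
    field_simp
  have hdiam : ∀ x ∈ X, ∀ y ∈ X, dist x y ≤ 2 * t0 := by
    apply aux_diam P
    intro x hx
    have := hstd x hx t0 ht0pos
    rwa [ht0b, min_self, ENNReal.ofReal_one] at this
  have hae : ∀ᵐ x ∂(Measure.pi fun _ : Fin n => P), ∀ j, x j ∈ X := by
    rw [ae_all_iff]
    intro j
    have h1 : ∀ᵐ z ∂P, z ∈ X :=
      (prob_compl_eq_zero_iff hX.measurableSet).mpr hPX
    exact (measurePreserving_eval (fun _ : Fin n => P) j).quasiMeasurePreserving.ae h1
  let j0 : Fin n := ⟨0, by omega⟩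
  have hH0 : ∀ x : Fin n → EuclideanSpace ℝ (Fin D), (∀ j, x j ∈ X) →
      hausdorffDist X (Set.range x) ≤ 2 * t0 := by
    intro x hx
    apply hausdorffDist_le_of_mem_dist (by positivity)
    · intro y hy
      exact ⟨x j0, ⟨j0, rfl⟩, hdiam _ hy _ (hx _)⟩
    · rintro _ ⟨j, rfl⟩
      exact ⟨x j, hx j, by simp; positivity⟩
  have hrhs : (2 * (2 / a) ^ (1 / b) + 4 * 2 ^ b * t0) * (l / n) ^ (1 / b) =
      2 * t + 4 * 2 ^ b * t0 * (l / n) ^ (1 / b) := by rw [ht]; ring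
  rw [hrhs]
  rcases le_or_gt 1 (a * t ^ b) with hc | hc
  · have htt : t0 ≤ t := by
      rw [← ht0b] at hc
      exact (Real.rpow_le_rpow_iff ht0pos.le htpos.le hb0).mp (le_of_mul_le_mul_left hc ha)
    calc _ ≤ ∫⁻ x, ENNReal.ofReal (2 * t0) ∂(Measure.pi fun _ : Fin n => P) := by
          apply lintegral_mono_ae
          filter_upwards [hae] with x hx
          exact ENNReal.ofReal_le_ofReal (hH0 x hx)
      _ = ENNReal.ofReal (2 * t0) := by simp
      _ ≤ _ := by
        apply ENNReal.ofReal_le_ofReal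
        have : 0 ≤ 4 * 2 ^ b * t0 * (l / n) ^ (1 / b) := by positivity
        linarith
  · have hhalf : a * (t / 2) ^ b = 2 * (l / n) / 2 ^ b := by
      rw [Real.div_rpow htpos.le (by norm_num), ← htb]; ring
    have hhalf1 : a * (t / 2) ^ b ≤ 1 := by
      have : (t / 2) ^ b ≤ t ^ b :=
        Real.rpow_le_rpow (by positivity) (by linarith) hb0.le
      nlinarith
    obtain ⟨S, hSX, hScard, hScov⟩ := aux_net P X t (2 * (l / n) / 2 ^ b) htpos (by positivity) (by
      intro x hx
      have := hstd x hx (t / 2) (by positivity)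
      rwa [min_eq_right hhalf1, hhalf] at this)
    set B : Set (Fin n → EuclideanSpace ℝ (Fin D)) := ⋃ c ∈ S, {x | ∀ j, x j ∉ ball c t} with hB
    have hBm : MeasurableSet B := by
      apply Finset.measurableSet_biUnion
      intro c _
      rw [Set.ofPred_forall]
      exact MeasurableSet.iInter fun j => (measurable_pi_apply j) measurableSet_ball.compl
    have hPB : (Measure.pi fun _ : Fin n => P) B ≤
        ENNReal.ofReal (S.card * Real.exp (-(n * (2 * (l / n))))) := by
      calc _ ≤ ∑ c ∈ S, (Measure.pi fun _ : Fin n => P) {x | ∀ j, x j ∉ ball c t} :=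
            measure_biUnion_finset_le _ _
        _ ≤ ∑ c ∈ S, ENNReal.ofReal (Real.exp (-(n * (2 * (l / n))))) := by
            apply Finset.sum_le_sum
            intro c hcS
            apply aux_bad P c t _ (by positivity)
            have := hstd c (hSX c hcS) t htpos
            rwa [min_eq_right hc.le, htb] at this
        _ = _ := by
            rw [Finset.sum_const, nsmul_eq_mul, ENNReal.ofReal_mul (by positivity),
              ENNReal.ofReal_natCast]
    have hreal : 2 * t0 * (S.card * Real.exp (-(n * (2 * (l / n))))) ≤
        4 * 2 ^ b * t0 * (l / n) ^ (1 / b) := by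
      have e1 : Real.exp (-(n * (2 * (l / n)))) = 1 / (n * n) := by
        have : -(n * (2 * (l / n))) = -(l + l) := by field_simp; ring
        rw [this, Real.exp_neg, Real.exp_add, hl, Real.exp_log hn0, one_div]
      have e2 : (S.card : ℝ) ≤ 2 ^ b * n / (2 * l) := by
        rw [le_div_iff₀ (by positivity)]
        have h2b : (0 : ℝ) < 2 ^ b := by positivity
        have : (S.card : ℝ) * (2 * (l / n) / 2 ^ b) = S.card * (2 * l) / (2 ^ b * n) := by
          field_simp
        rw [this, div_le_one (by positivity)] at hScard
        exact hScard
      have e3 : (S.card : ℝ) * (1 / (n * n)) ≤ 2 * 2 ^ b * (l / n) := by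
        calc (S.card : ℝ) * (1 / (n * n)) ≤ 2 ^ b * n / (2 * l) * (1 / (n * n)) := by gcongr
          _ = 2 ^ b / n * (1 / (2 * l)) := by field_simp
          _ ≤ 2 ^ b / n * (2 * l) := by
            gcongr
            rw [div_le_iff₀ (by positivity)]
            nlinarith
          _ = _ := by ring
      rw [e1]
      calc _ ≤ 2 * t0 * (2 * 2 ^ b * (l / n) ^ (1 / b)) := by
            apply mul_le_mul_of_nonneg_left _ (by positivity)
            exact e3.trans (mul_le_mul_of_nonneg_left hLL (by positivity))
        _ = _ := by ring
    calc _ ≤ ∫⁻ x, (ENNReal.ofReal (2 * t) + B.indicator (fun _ => ENNReal.ofReal (2 * t0)) x)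
            ∂(Measure.pi fun _ : Fin n => P) := by
          apply lintegral_mono_ae
          filter_upwards [hae] with x hx
          by_cases hxB : x ∈ B
          · rw [Set.indicator_of_mem hxB]
            exact (ENNReal.ofReal_le_ofReal (hH0 x hx)).trans le_add_self
          · rw [Set.indicator_of_notMem hxB, add_zero]
            apply ENNReal.ofReal_le_ofReal
            apply hausdorffDist_le_of_mem_dist (by positivity)
            · intro y hy
              obtain ⟨c, hcS, hyc⟩ := hScov y hy
              simp only [hB, Set.mem_iUnion, Set.mem_ofPred_eq, not_exists, not_forall,
                not_not, mem_ball] at hxB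
              obtain ⟨j, hj⟩ := hxB c hcS
              refine ⟨x j, ⟨j, rfl⟩, ?_⟩
              have := dist_triangle_right y (x j) c
              linarith
            · rintro _ ⟨j, rfl⟩
              exact ⟨x j, hx j, by simp; positivity⟩
      _ = ENNReal.ofReal (2 * t) + ENNReal.ofReal (2 * t0) * (Measure.pi fun _ : Fin n => P) B := by
          rw [lintegral_add_left measurable_const, lintegral_indicator_const hBm]
          simp
      _ ≤ ENNReal.ofReal (2 * t) + ENNReal.ofReal (2 * t0) *
            ENNReal.ofReal (S.card * Real.exp (-(n * (2 * (l / n))))) := by gcongr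
      _ = ENNReal.ofReal (2 * t + 2 * t0 * (S.card * Real.exp (-(n * (2 * (l / n)))))) := by
          rw [← ENNReal.ofReal_mul (by positivity), ← ENNReal.ofReal_add (by positivity)
            (by positivity)]
      _ ≤ _ := by
          apply ENNReal.ofReal_le_ofReal
          linarith
end
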